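/- Assume P is irreducible (for all s,s' ∈ S there exists n ≥ 1 with (P^n)(s,s') > 0). Then any two nonempty sets C₁, C₂ ⊆ S × ℕ that are both closed for the belief kernel K have nonempty intersection; in particular there do not exist two disjoint nonempty closed sets for K. -/

import Mathlib

open scoped BigOperators

/-- Transition kernel of the belief Markov chain of an intermittently observable
Markov chain with transition matrix `P` and observation probability `ρ`:
`K((s,η),(s,η+1)) = 1-ρ`, `K((s,η),(j,0)) = ρ·(P^(η+1))(s,j)`, and `0` otherwise. -/
noncomputable def beliefK {S : Type*} [Fintype S] [DecidableEq S]
    (P : Matrix S S ℝ) (ρ : ℝ) : S × ℕ → S × ℕ → ℝ :=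
  fun p q =>
    if q.2 = p.2 + 1 ∧ q.1 = p.1 then 1 - ρ
    else if q.2 = 0 then ρ * (P ^ (p.2 + 1)) p.1 q.1
    else 0

/-!
Since `ρ > 0`, a closed set containing `(s, η)` contains `(j, 0)` whenever `(P ^ (η + 1)) s j > 0`.
No row of `P ^ (η + 1)` vanishes, so every nonempty closed set contains some `(i, 0)`; following
positive entries of `P` one at a time, always at age `0`, it contains `(t, 0)` for every state `t`
accessible from `i`. Two closed sets therefore meet as soon as any two states have a common
accessible state; if `P` is irreducible, every state is accessible from every other.
-/

theorem exists_pos_of_sum_univ_pos {ι M : Type*} [Fintype ι] [AddCommMonoid M] [LinearOrder M]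
    [AddLeftMono M] {f : ι → M} (h : 0 < ∑ i, f i) : ∃ i, 0 < f i := by
  simpa using Finset.exists_lt_of_sum_lt (s := Finset.univ) (f := 0) (g := f) (by simpa using h)

section Matrix

variable {l m n R : Type*} [Semiring R] [PartialOrder R] [IsStrictOrderedRing R]

theorem matrix_mul_apply_pos_iff [Fintype m] {A : Matrix l m R} {B : Matrix m n R}
    (hA : ∀ i j, 0 ≤ A i j) (hB : ∀ j k, 0 ≤ B j k) {i : l} {k : n} :
    0 < (A * B) i k ↔ ∃ j, 0 < A i j ∧ 0 < B j k := by
  rw [Matrix.mul_apply, Finset.sum_pos_iff_of_nonneg fun j _ => mul_nonneg (hA i j) (hB j k)]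
  constructor
  · rintro ⟨j, -, h⟩
    exact ⟨j, (hA i j).lt_of_ne' (left_ne_zero_of_mul h.ne'),
      (hB j k).lt_of_ne' (right_ne_zero_of_mul h.ne')⟩
  · rintro ⟨j, hij, hjk⟩
    exact ⟨j, Finset.mem_univ j, mul_pos hij hjk⟩

theorem exists_matrix_pow_apply_pos [Fintype n] [DecidableEq n] {A : Matrix n n R}
    (hA : ∀ i j, 0 ≤ A i j) (hrow : ∀ i, ∃ j, 0 < A i j) (k : ℕ) (i : n) :
    ∃ j, 0 < (A ^ k) i j := by
  induction k with
  | zero => exact ⟨i, by simp⟩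
  | succ k ih =>
    obtain ⟨j, hij⟩ := ih
    obtain ⟨t, hjt⟩ := hrow j
    rw [pow_succ]
    exact ⟨t, (matrix_mul_apply_pos_iff (Matrix.pow_apply_nonneg hA k) hA).2 ⟨j, hij, hjt⟩⟩

end Matrix

/-- A set of states is closed for the transition kernel `K` if no transition of positive weight
leaves it. -/
def IsClosedFor {X : Type*} (K : X → X → ℝ) (C : Set X) : Prop :=
  ∀ p ∈ C, ∀ q, 0 < K p q → q ∈ C

section Belief

variable {S : Type*} [Fintype S] [DecidableEq S] {P : Matrix S S ℝ} {ρ : ℝ}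

theorem beliefK_apply_zero (p : S × ℕ) (j : S) :
    beliefK P ρ p (j, 0) = ρ * (P ^ (p.2 + 1)) p.1 j := by
  simp [beliefK]

namespace IsClosedFor

variable {C : Set (S × ℕ)}

theorem mem_zero_of_pow_pos (hC : IsClosedFor (beliefK P ρ) C) (hρ : 0 < ρ) {p : S × ℕ}
    (hp : p ∈ C) {j : S} (hj : 0 < (P ^ (p.2 + 1)) p.1 j) : (j, 0) ∈ C :=
  hC p hp (j, 0) <| by
    rw [beliefK_apply_zero]
    exact mul_pos hρ hj

theorem mem_zero_of_accessible (hC : IsClosedFor (beliefK P ρ) C) (hρ : 0 < ρ)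
    (hP : ∀ i j, 0 ≤ P i j) {i j : S} (hi : (i, 0) ∈ C) {n : ℕ} (hij : 0 < (P ^ n) i j) :
    (j, 0) ∈ C := by
  induction n generalizing j with
  | zero =>
    obtain rfl : i = j := by
      by_contra hne
      simp [hne] at hij
    exact hi
  | succ n ih =>
    rw [pow_succ, matrix_mul_apply_pos_iff (Matrix.pow_apply_nonneg hP n) hP] at hij
    obtain ⟨t, hit, htj⟩ := hij
    exact hC.mem_zero_of_pow_pos hρ (ih hit) (by simpa using htj)

theorem exists_mem_zero (hC : IsClosedFor (beliefK P ρ) C) (hρ : 0 < ρ)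
    (hP : ∀ i j, 0 ≤ P i j) (hrow : ∀ i, ∃ j, 0 < P i j) (hne : C.Nonempty) :
    ∃ j, (j, 0) ∈ C := by
  obtain ⟨p, hp⟩ := hne
  obtain ⟨j, hj⟩ := exists_matrix_pow_apply_pos hP hrow (p.2 + 1) p.1
  exact ⟨j, hC.mem_zero_of_pow_pos hρ hp hj⟩

end IsClosedFor

theorem stmt7_general (hρ : 0 < ρ) (hP : ∀ s s', 0 ≤ P s s') (hrow : ∀ s, ∃ s', 0 < P s s')
    (hcommon : ∀ s s', ∃ t m n, 0 < (P ^ m) s t ∧ 0 < (P ^ n) s' t)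
    {C₁ C₂ : Set (S × ℕ)} (hC₁ne : C₁.Nonempty) (hC₂ne : C₂.Nonempty)
    (hC₁ : IsClosedFor (beliefK P ρ) C₁) (hC₂ : IsClosedFor (beliefK P ρ) C₂) :
    (C₁ ∩ C₂).Nonempty := by
  obtain ⟨s₁, hs₁⟩ := hC₁.exists_mem_zero hρ hP hrow hC₁ne
  obtain ⟨s₂, hs₂⟩ := hC₂.exists_mem_zero hρ hP hrow hC₂ne
  obtain ⟨t, m, n, hs₁t, hs₂t⟩ := hcommon s₁ s₂
  exact ⟨(t, 0), hC₁.mem_zero_of_accessible hρ hP hs₁ hs₁t,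
    hC₂.mem_zero_of_accessible hρ hP hs₂ hs₂t⟩

end Belief

/-- If `P` is irreducible, then any two nonempty sets closed for the belief
kernel `K` have nonempty intersection; in particular there do not exist two
disjoint nonempty closed sets for `K`. -/
theorem stmt7 {S : Type*} [Fintype S] [DecidableEq S] [Nonempty S]
    (P : Matrix S S ℝ) (ρ : ℝ) (hρ0 : 0 < ρ) (hρ1 : ρ ≤ 1)
    (hPnn : ∀ s s', 0 ≤ P s s') (hProw : ∀ s, ∑ s', P s s' = 1)
    (hirr : ∀ s s' : S, ∃ n : ℕ, 1 ≤ n ∧ 0 < (P ^ n) s s')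
    (C₁ C₂ : Set (S × ℕ)) (hC₁ne : C₁.Nonempty) (hC₂ne : C₂.Nonempty)
    (hC₁closed : ∀ p ∈ C₁, ∀ q : S × ℕ, 0 < beliefK P ρ p q → q ∈ C₁)
    (hC₂closed : ∀ p ∈ C₂, ∀ q : S × ℕ, 0 < beliefK P ρ p q → q ∈ C₂) :
    (C₁ ∩ C₂).Nonempty := by
  exact stmt7_general hρ0 hPnn (fun s => exists_pos_of_sum_univ_pos (hProw s ▸ one_pos))
    (fun s s' => (hirr s s').elim fun n hn => ⟨s', n, 0, hn.2, by simp⟩)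
    hC₁ne hC₂ne hC₁closed hC₂closed
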